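/- arXiv:2207.07430 — 2 statements merged into one kernel-verified Lean document; each statement's English description precedes it below -/
import Mathlib

section
/- Let σ₁, σ₂, σ₃ be the Pauli matrices and define the 4×4 complex matrices γ₂ = σ₃ ⊗ I₂, γ_y = (iσ₂) ⊗ σ₁, γ₃ = (iσ₂) ⊗ σ₂, γ₄ = (iσ₂) ⊗ σ₃ (Kronecker products). Let β₁, β₂, c be real with c ≠ 0 and β₁β₂ ≠ 0, and set M = β₂·γ₃γ₄ + i·c·I₄ + i·(β₁/√2)·γ₂γ_y. Then M has nonzero kernel if and only if 2c² = (β₁ + √2β₂)² or 2c² = (β₁ − √2β₂)², and in that case the kernel of M is 1-dimensional. -/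
open Matrix Complex
open scoped Kronecker

noncomputable section

/-- Pauli matrix σ₁. -/
def σ1 : Matrix (Fin 2) (Fin 2) ℂ := !![0, 1; 1, 0]
/-- Pauli matrix σ₂. -/
def σ2 : Matrix (Fin 2) (Fin 2) ℂ := !![0, -I; I, 0]
/-- Pauli matrix σ₃. -/
def σ3 : Matrix (Fin 2) (Fin 2) ℂ := !![1, 0; 0, -1]

/-- γ₂ = σ₃ ⊗ I₂ (timelike). -/
def γ2' : Matrix (Fin 2 × Fin 2) (Fin 2 × Fin 2) ℂ := σ3 ⊗ₖ (1 : Matrix (Fin 2) (Fin 2) ℂ)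
/-- γ_y = (iσ₂) ⊗ σ₁. -/
def γy : Matrix (Fin 2 × Fin 2) (Fin 2 × Fin 2) ℂ := (I • σ2) ⊗ₖ σ1
/-- γ₃ = (iσ₂) ⊗ σ₂. -/
def γ3' : Matrix (Fin 2 × Fin 2) (Fin 2 × Fin 2) ℂ := (I • σ2) ⊗ₖ σ2
/-- γ₄ = (iσ₂) ⊗ σ₃. -/
def γ4' : Matrix (Fin 2 × Fin 2) (Fin 2 × Fin 2) ℂ := (I • σ2) ⊗ₖ σ3

/-!
Since `γ₃γ₄ = -i (I₂ ⊗ σ₁)` and `γ₂γ_y = σ₁ ⊗ σ₁`, conjugation by `H ⊗ H`, where `H σ₃ = σ₁ H`,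
diagonalizes `M`. With `b = β₁/√2`, its eigenvalues are `i (c + (b s - β₂) t)` for signs
`s, t = ±1`, and the dimension of the kernel is the number of sign pairs for which this vanishes.
The eigenvalues of two distinct sign pairs can both vanish only if `c`, `b` or `β₂` is zero.
-/

section Diagonalization

variable {K n : Type*} [Field K] [Fintype n] [DecidableEq n] {A P : Matrix n n K} {d : n → K}

lemma finrank_ker_mulVecLin_of_mul_eq_mul_diagonal (hP : IsUnit P.det)
    (hAP : A * P = P * diagonal d) :
    Module.finrank K (LinearMap.ker A.mulVecLin) = {i | d i = 0}.ncard := by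
  classical
  have hrank : A.rank = {i | d i = 0}ᶜ.ncard := by
    rw [← rank_mul_eq_left_of_isUnit_det P A hP, hAP, rank_mul_eq_right_of_isUnit_det P _ hP,
      rank_diagonal, ← Nat.card_eq_fintype_card]
    rfl
  have hker := A.mulVecLin.finrank_range_add_finrank_ker
  have hcard := Set.ncard_add_ncard_compl {i | d i = 0}
  rw [← Matrix.rank, hrank, Module.finrank_pi, ← Nat.card_eq_fintype_card] at hker
  omega

lemma ker_mulVecLin_ne_bot_iff_of_mul_eq_mul_diagonal (hP : IsUnit P.det)
    (hAP : A * P = P * diagonal d) :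
    LinearMap.ker A.mulVecLin ≠ ⊥ ↔ ∃ i, d i = 0 := by
  rw [← Submodule.one_le_finrank_iff, finrank_ker_mulVecLin_of_mul_eq_mul_diagonal hP hAP,
    Nat.one_le_iff_ne_zero, ← Nat.pos_iff_ne_zero, Set.ncard_pos]
  rfl

end Diagonalization

lemma γ3'_mul_γ4' : γ3' * γ4' = -I • (1 ⊗ₖ σ1) := by
  have hleft : (I • σ2) * (I • σ2) = -1 := by
    ext i j; fin_cases i <;> fin_cases j <;> simp [σ2]
  have hright : σ2 * σ3 = I • σ1 := by
    ext i j; fin_cases i <;> fin_cases j <;> simp [σ1, σ2, σ3]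
  rw [γ3', γ4', ← mul_kronecker_mul, hleft, hright, kronecker_smul, ← neg_one_smul ℂ 1,
    smul_kronecker, smul_smul]
  simp

lemma γ2'_mul_γy : γ2' * γy = σ1 ⊗ₖ σ1 := by
  have hleft : σ3 * (I • σ2) = σ1 := by
    ext i j; fin_cases i <;> fin_cases j <;> simp [σ1, σ2, σ3]
  rw [γ2', γy, ← mul_kronecker_mul, hleft, one_mul]

/-- The sign `(-1)^i`, that is, the `i`-th diagonal entry of `σ3`. -/
def pauliSign : Fin 2 → ℂ := ![1, -1]

/-- The unnormalized Hadamard matrix, whose columns are eigenvectors of `σ1`. -/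
def pauliHadamard : Matrix (Fin 2) (Fin 2) ℂ := !![1, 1; 1, -1]

lemma σ1_mul_pauliHadamard : σ1 * pauliHadamard = pauliHadamard * diagonal pauliSign := by
  ext i j; fin_cases i <;> fin_cases j <;> simp [σ1, pauliHadamard, pauliSign]

lemma isUnit_det_pauliHadamard_kronecker_self :
    IsUnit (pauliHadamard ⊗ₖ pauliHadamard).det := by
  have hdet : pauliHadamard.det = -2 := by norm_num [pauliHadamard]
  norm_num [det_kronecker, hdet]

/-- The algebraic operator `β₂ γ₃γ₄ + i c + i b γ₂γ_y` of the Killing spinor invariance equation,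
with complex parameters and `b` standing for `β₁/√2`. -/
def killingSpinorMatrix (β₂ c b : ℂ) : Matrix (Fin 2 × Fin 2) (Fin 2 × Fin 2) ℂ :=
  β₂ • (γ3' * γ4') + (I * c) • 1 + (I * b) • (γ2' * γy)

/-- The eigenvalue of `killingSpinorMatrix β₂ c b` on the column of
`pauliHadamard ⊗ₖ pauliHadamard` indexed by `p`. -/
def killingSpinorEigenvalue (β₂ c b : ℂ) (p : Fin 2 × Fin 2) : ℂ :=
  I * (c + (b * pauliSign p.1 - β₂) * pauliSign p.2)

lemma killingSpinorMatrix_mul_pauliHadamard_kronecker_self (β₂ c b : ℂ) :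
    killingSpinorMatrix β₂ c b * (pauliHadamard ⊗ₖ pauliHadamard) =
      (pauliHadamard ⊗ₖ pauliHadamard) * diagonal (killingSpinorEigenvalue β₂ c b) := by
  set P := pauliHadamard ⊗ₖ pauliHadamard with hP
  have hone : (1 ⊗ₖ σ1) * P = P * diagonal fun p ↦ pauliSign p.2 := by
    rw [hP, ← mul_kronecker_mul, one_mul, σ1_mul_pauliHadamard, ← mul_one pauliHadamard,
      mul_assoc, mul_kronecker_mul, one_mul, mul_one, ← diagonal_one, diagonal_kronecker_diagonal]
    simp only [one_mul]
  have hσ1 : (σ1 ⊗ₖ σ1) * P = P * diagonal fun p ↦ pauliSign p.1 * pauliSign p.2 := by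
    rw [hP, ← mul_kronecker_mul, σ1_mul_pauliHadamard, mul_kronecker_mul,
      diagonal_kronecker_diagonal]
  rw [killingSpinorMatrix, γ3'_mul_γ4', γ2'_mul_γy, add_mul, add_mul, smul_mul_assoc,
    smul_mul_assoc, smul_mul_assoc, smul_mul_assoc, one_mul, hone, hσ1]
  ext p q
  simp only [Matrix.add_apply, Matrix.smul_apply, mul_diagonal, smul_eq_mul,
    killingSpinorEigenvalue]
  ring

lemma exists_add_mul_pauliSign_eq_zero_iff (x y : ℂ) :
    (∃ i, x + y * pauliSign i = 0) ↔ x ^ 2 = y ^ 2 := by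
  simp [Fin.exists_fin_two, pauliSign, sq_eq_sq_iff_eq_or_eq_neg, add_eq_zero_iff_eq_neg, or_comm]

lemma exists_killingSpinorEigenvalue_eq_zero_iff (β₂ c b : ℂ) :
    (∃ p, killingSpinorEigenvalue β₂ c b p = 0) ↔ c ^ 2 = (b + β₂) ^ 2 ∨ c ^ 2 = (b - β₂) ^ 2 := by
  have hneg : (-b - β₂) ^ 2 = (b + β₂) ^ 2 := by ring
  simp only [killingSpinorEigenvalue, mul_eq_zero, I_ne_zero, false_or, Prod.exists,
    exists_add_mul_pauliSign_eq_zero_iff]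
  simp [Fin.exists_fin_two, pauliSign, hneg, or_comm]

lemma pauliSign_ne_zero (i : Fin 2) : pauliSign i ≠ 0 := by
  fin_cases i <;> simp [pauliSign]

lemma pauliSign_eq_neg_of_ne {i j : Fin 2} (hij : i ≠ j) : pauliSign i = -pauliSign j := by
  fin_cases i <;> fin_cases j <;> simp_all [pauliSign]

lemma subsingleton_setOf_killingSpinorEigenvalue_eq_zero {β₂ c b : ℂ} (hβ₂ : β₂ ≠ 0) (hc : c ≠ 0)
    (hb : b ≠ 0) : {p | killingSpinorEigenvalue β₂ c b p = 0}.Subsingleton := by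
  rintro ⟨i, j⟩ hp ⟨k, l⟩ hq
  simp only [killingSpinorEigenvalue, Set.mem_ofPred_eq, mul_eq_zero, I_ne_zero, false_or] at hp hq
  have hsk := pauliSign_ne_zero k
  have hsl := pauliSign_ne_zero l
  by_cases hik : i = k <;> by_cases hjl : j = l
  · rw [hik, hjl]
  · rw [hik, pauliSign_eq_neg_of_ne hjl] at hp
    exact absurd (by linear_combination (hp + hq) / 2) hc
  · rw [pauliSign_eq_neg_of_ne hik, hjl] at hp
    have hbkl : b * pauliSign k * pauliSign l = 0 := by linear_combination (hq - hp) / 2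
    exact absurd hbkl (mul_ne_zero (mul_ne_zero hb hsk) hsl)
  · rw [pauliSign_eq_neg_of_ne hik, pauliSign_eq_neg_of_ne hjl] at hp
    have hβ₂l : β₂ * pauliSign l = 0 := by linear_combination (hp - hq) / 2
    exact absurd hβ₂l (mul_ne_zero hβ₂ hsl)

theorem ker_killingSpinorMatrix_ne_bot_iff (β₂ c b : ℂ) :
    LinearMap.ker (killingSpinorMatrix β₂ c b).mulVecLin ≠ ⊥ ↔
      c ^ 2 = (b + β₂) ^ 2 ∨ c ^ 2 = (b - β₂) ^ 2 :=
  (ker_mulVecLin_ne_bot_iff_of_mul_eq_mul_diagonal isUnit_det_pauliHadamard_kronecker_self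
    (killingSpinorMatrix_mul_pauliHadamard_kronecker_self β₂ c b)).trans
    (exists_killingSpinorEigenvalue_eq_zero_iff β₂ c b)

theorem finrank_ker_killingSpinorMatrix_le_one {β₂ c b : ℂ} (hβ₂ : β₂ ≠ 0) (hc : c ≠ 0)
    (hb : b ≠ 0) :
    Module.finrank ℂ (LinearMap.ker (killingSpinorMatrix β₂ c b).mulVecLin) ≤ 1 := by
  rw [finrank_ker_mulVecLin_of_mul_eq_mul_diagonal isUnit_det_pauliHadamard_kronecker_self
    (killingSpinorMatrix_mul_pauliHadamard_kronecker_self β₂ c b),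
    Set.ncard_le_one_iff_subsingleton]
  exact subsingleton_setOf_killingSpinorEigenvalue_eq_zero hβ₂ hc hb

lemma sq_eq_div_add_sq_iff {K : Type*} [Field K] {r : K} (hr : r ≠ 0) (x y z : K) :
    z ^ 2 = (x / r + y) ^ 2 ↔ r ^ 2 * z ^ 2 = (x + r * y) ^ 2 := by
  have hmul : x + r * y = r * (x / r + y) := by field_simp
  rw [hmul, mul_pow, mul_right_inj' (pow_ne_zero 2 hr)]

theorem stmt_8_general (β₁ β₂ c : ℂ) (hc : c ≠ 0) (hβ : β₁ * β₂ ≠ 0) :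
    (LinearMap.ker (killingSpinorMatrix β₂ c (β₁ / Real.sqrt 2)).mulVecLin ≠ ⊥ ↔
      2 * c ^ 2 = (β₁ + Real.sqrt 2 * β₂) ^ 2 ∨ 2 * c ^ 2 = (β₁ - Real.sqrt 2 * β₂) ^ 2) ∧
    (LinearMap.ker (killingSpinorMatrix β₂ c (β₁ / Real.sqrt 2)).mulVecLin ≠ ⊥ →
      Module.finrank ℂ
        (LinearMap.ker (killingSpinorMatrix β₂ c (β₁ / Real.sqrt 2)).mulVecLin) = 1) := by
  obtain ⟨hβ₁, hβ₂⟩ := mul_ne_zero_iff.mp hβ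
  have hsqrt : (Real.sqrt 2 : ℂ) ≠ 0 := by norm_num
  have hsq : (Real.sqrt 2 : ℂ) ^ 2 = 2 := mod_cast Real.sq_sqrt zero_le_two
  refine ⟨?_, fun hker ↦ ?_⟩
  · rw [ker_killingSpinorMatrix_ne_bot_iff, sub_eq_add_neg _ β₂, sq_eq_div_add_sq_iff hsqrt,
      sq_eq_div_add_sq_iff hsqrt, hsq, mul_neg, ← sub_eq_add_neg]
  · exact (finrank_ker_killingSpinorMatrix_le_one hβ₂ hc (div_ne_zero hβ₁ hsqrt)).antisymm
      (Submodule.one_le_finrank_iff.mpr hker)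

/-- For `M = β₂ γ₃γ₄ + icI₄ + i(β₁/√2) γ₂γ_y` with `c ≠ 0` and `β₁β₂ ≠ 0`: `M` has
nonzero kernel iff `2c² = (β₁ + √2 β₂)²` or `2c² = (β₁ − √2 β₂)²`, and in that case
the kernel is 1-dimensional (quarter-BPS case λ₁₀ for `ℝ × AdS₄`). -/
theorem stmt_8 (β₁ β₂ c : ℝ) (hc : c ≠ 0) (hβ : β₁ * β₂ ≠ 0) :
    (LinearMap.ker ((β₂ : ℂ) • (γ3' * γ4') + (I * c) • 1
        + (I * ((β₁ / Real.sqrt 2 : ℝ) : ℂ)) • (γ2' * γy)).mulVecLin ≠ ⊥ ↔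
      2 * c ^ 2 = (β₁ + Real.sqrt 2 * β₂) ^ 2 ∨ 2 * c ^ 2 = (β₁ - Real.sqrt 2 * β₂) ^ 2) ∧
    (LinearMap.ker ((β₂ : ℂ) • (γ3' * γ4') + (I * c) • 1
        + (I * ((β₁ / Real.sqrt 2 : ℝ) : ℂ)) • (γ2' * γy)).mulVecLin ≠ ⊥ →
      Module.finrank ℂ
        (LinearMap.ker ((β₂ : ℂ) • (γ3' * γ4') + (I * c) • 1
          + (I * ((β₁ / Real.sqrt 2 : ℝ) : ℂ)) • (γ2' * γy)).mulVecLin) = 1) := by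
  obtain ⟨hker, hrank⟩ := stmt_8_general β₁ β₂ c (mod_cast hc) (mod_cast hβ)
  exact ofReal_div β₁ (Real.sqrt 2) ▸ ⟨hker.trans (by norm_cast), hrank⟩

end
end

section
/- Let σ₁, σ₂, σ₃ be the Pauli matrices and define the 4×4 complex matrices γ₂ = σ₃ ⊗ I₂, γ_y = (iσ₂) ⊗ σ₁, γ₃ = (iσ₂) ⊗ σ₂, γ₄ = (iσ₂) ⊗ σ₃ (Kronecker products). For c > 0, set a = γ₃γ₄ − γ₂γ₄ and b = c·I₄ − (1/√2)(γ₂ + γ₃)γ_y. Then a + ib or a − ib has nonzero kernel if and only if c = 2^{3/4}; and when c = 2^{3/4}, the complex dimensions of ker(a + ib) and ker(a − ib) sum to 2. -/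
open Matrix Complex
open scoped Kronecker

noncomputable section

/-!
With the null vectors `n = γ₃ - γ₂`, `l = γ₂ + γ₃` of the Clifford algebra, `a = n γ₄` and
`b = c - s l γ_y`, where `s = 1/√2`; both `n γ₄` and `l γ_y` are nilpotent. For `ζ = ±i` the kernel
of `a + ζ b` is the eigenspace of `D = n γ₄ - ζ s l γ_y` at `-ζ c`. Two facts determine the
spectrum of `D`. First, `D² = -ζ s [l, n] γ₄ γ_y` and hence `D⁴ = 16 s² = 8`. Second, the invertible
element `u = γ₄ (1 + (i/4) [l, n])`, a reflection times a boost of imaginary rapidity, satisfies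
`D u = i u D`, so the eigenvalues are permuted by multiplication by `i`. Since the space has
dimension four, `D` has the four fourth roots of `8` as simple eigenvalues, so `a + ζ b` has a
kernel exactly when `c⁴ = 8`, and then it is a line.
-/

section Eigenvalues

open Module End

section CommRing

variable {R M : Type*} [CommRing R] [AddCommGroup M] [Module R M]

lemma hasEigenvalue_mul_of_mul_eq_smul_mul {f u : End R M} {ζ μ : R} (hu : Function.Injective u)
    (huf : f * u = ζ • (u * f)) (hμ : f.HasEigenvalue μ) : f.HasEigenvalue (ζ * μ) := by
  obtain ⟨v, hv⟩ := hμ.exists_hasEigenvector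
  have hfuv : f (u v) = (ζ * μ) • u v := by
    simpa [hv.apply_eq_smul, mul_smul] using LinearMap.congr_fun huf v
  exact hasEigenvalue_of_hasEigenvector
    ⟨mem_eigenspace_iff.2 hfuv, fun h ↦ hv.2 (hu (h.trans u.map_zero.symm))⟩

lemma hasEigenvalue_pow_mul_of_mul_eq_smul_mul {f u : End R M} {ζ μ : R}
    (hu : Function.Injective u) (huf : f * u = ζ • (u * f)) (hμ : f.HasEigenvalue μ) (k : ℕ) :
    f.HasEigenvalue (ζ ^ k * μ) := by
  induction k with
  | zero => simpa using hμ
  | succ k ih => simpa [pow_succ', mul_assoc] using hasEigenvalue_mul_of_mul_eq_smul_mul hu huf ih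

lemma pow_eq_of_hasEigenvalue [IsDomain R] [IsTorsionFree R M] {f : End R M} {μ a : R} {n : ℕ}
    (hf : f ^ n = algebraMap R _ a) (hμ : f.HasEigenvalue μ) : μ ^ n = a := by
  obtain ⟨v, hv⟩ := hμ.exists_hasEigenvector
  have hfv : μ ^ n • v = a • v := by simpa [hf] using (hv.pow_apply n).symm
  exact smul_left_injective R hv.2 hfv

end CommRing

variable {K V : Type*} [Field K] [AddCommGroup V] [Module K V] [FiniteDimensional K V]

lemma finrank_eigenspace_eq_one_of_finrank_le_card {f : End K V}
    {s : Finset K} (hs : ∀ μ ∈ s, f.HasEigenvalue μ) (hcard : finrank K V ≤ s.card) {μ : K}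
    (hμ : μ ∈ s) : finrank K (f.eigenspace μ) = 1 := by
  classical
  have hroots : s.val = f.charpoly.roots := by
    refine Multiset.eq_of_le_of_card_le ((Multiset.le_iff_subset s.nodup).2 fun ν hν ↦ ?_) ?_
    · exact (Polynomial.mem_roots f.charpoly_monic.ne_zero).2
        (f.hasEigenvalue_iff_isRoot_charpoly ν |>.1 (hs ν hν))
    · exact (f.charpoly.card_roots'.trans_eq f.charpoly_natDegree).trans hcard
  apply le_antisymm
  · calc finrank K (f.eigenspace μ) ≤ f.charpoly.rootMultiplicity μ := f.finrank_eigenspace_le μ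
      _ = s.val.count μ := by rw [hroots, Polynomial.count_roots]
      _ ≤ 1 := Multiset.nodup_iff_count_le_one.1 s.nodup μ
  · exact Submodule.one_le_finrank_iff.2 (hs μ hμ)

variable [Nontrivial V]

lemma exists_hasEigenvalue_of_pow_eq {f : End K V} {ζ a μ : K} {n : ℕ} [NeZero n]
    (hζ : IsPrimitiveRoot ζ n) (hf : f ^ n = algebraMap K _ a) (hμ : μ ^ n = a) :
    ∃ ν, f.HasEigenvalue ν := by
  have hsplits : (minpoly K f).Splits :=
    (X_pow_sub_C_splits_of_isPrimitiveRoot hζ hμ).of_dvd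
      (Polynomial.X_pow_sub_C_ne_zero (NeZero.pos n) a) (minpoly.dvd K f (by simp [hf]))
  obtain ⟨ν, hν⟩ := hsplits.exists_eval_eq_zero
    (minpoly.degree_pos (Algebra.IsIntegral.isIntegral f)).ne'
  exact ⟨ν, hasEigenvalue_of_isRoot hν⟩

lemma hasEigenvalue_iff_pow_eq {f u : End K V} {ζ a μ : K} {n : ℕ} [NeZero n]
    (hζ : IsPrimitiveRoot ζ n) (ha : a ≠ 0) (hf : f ^ n = algebraMap K _ a)
    (hu : Function.Injective u) (huf : f * u = ζ • (u * f)) :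
    f.HasEigenvalue μ ↔ μ ^ n = a := by
  refine ⟨pow_eq_of_hasEigenvalue hf, fun hμ ↦ ?_⟩
  obtain ⟨ν, hν⟩ := exists_hasEigenvalue_of_pow_eq hζ hf hμ
  have hνn : ν ^ n = a := pow_eq_of_hasEigenvalue hf hν
  have hν0 : ν ≠ 0 := ne_zero_pow (NeZero.ne n) (hνn.trans_ne ha)
  have hratio : (μ / ν) ^ n = 1 := by rw [div_pow, hμ, hνn, div_self ha]
  obtain ⟨k, -, hk⟩ := hζ.eq_pow_of_pow_eq_one hratio
  rw [← div_mul_cancel₀ μ hν0, ← hk]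
  exact hasEigenvalue_pow_mul_of_mul_eq_smul_mul hu huf hν k

lemma finrank_eigenspace_eq_one_of_pow_eq {f u : End K V} {ζ a μ : K} {n : ℕ}
    (hn : finrank K V = n) (hζ : IsPrimitiveRoot ζ n) (ha : a ≠ 0)
    (hf : f ^ n = algebraMap K _ a) (hu : Function.Injective u) (huf : f * u = ζ • (u * f))
    (hμ : μ ^ n = a) : finrank K (f.eigenspace μ) = 1 := by
  classical
  have hpos : 0 < n := hn ▸ finrank_pos
  have : NeZero n := ⟨hpos.ne'⟩
  have hmem (ν : K) : ν ∈ (Polynomial.nthRoots n a).toFinset ↔ ν ^ n = a := by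
    rw [Multiset.mem_toFinset, Polynomial.mem_nthRoots hpos]
  refine finrank_eigenspace_eq_one_of_finrank_le_card
    (fun ν hν ↦ (hasEigenvalue_iff_pow_eq hζ ha hf hu huf).2 ((hmem ν).1 hν)) ?_ ((hmem μ).2 hμ)
  rw [Multiset.toFinset_card_of_nodup (hζ.nthRoots_nodup ha), hζ.card_nthRoots, if_pos ⟨μ, hμ⟩, hn]

end Eigenvalues

lemma neg_lie_eq_lie_swap {R : Type*} [Ring R] (a b : R) : -⁅a, b⁆ = ⁅b, a⁆ :=
  neg_sub _ _

/-- Generators of a Clifford algebra in light-cone form: `n`, `l` are null with `{n, l} = -4`, and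
`y`, `z` are square roots of `-1` that anticommute with `n`, `l` and each other. The value `-4` is
the one taken by `n = x - t`, `l = x + t` for anticommuting `t`, `x` with `t² = 1`, `x² = -1`. -/
structure IsLightConeFrame {R : Type*} [Ring R] (n l y z : R) : Prop where
  n_mul_n : n * n = 0
  l_mul_l : l * l = 0
  y_mul_y : y * y = -1
  z_mul_z : z * z = -1
  n_mul_l : n * l = -4 - l * n
  y_mul_n : y * n = -(n * y)
  y_mul_l : y * l = -(l * y)
  z_mul_n : z * n = -(n * z)
  z_mul_l : z * l = -(l * z)
  z_mul_y : z * y = -(y * z)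

namespace IsLightConeFrame

section Ring

variable {R : Type*} [Ring R] {n l y z : R}

lemma symm (h : IsLightConeFrame n l y z) : IsLightConeFrame l n z y where
  n_mul_n := h.l_mul_l
  l_mul_l := h.n_mul_n
  y_mul_y := h.z_mul_z
  z_mul_z := h.y_mul_y
  n_mul_l := by rw [h.n_mul_l, sub_sub_cancel]
  y_mul_n := h.z_mul_l
  y_mul_l := h.z_mul_n
  z_mul_n := h.y_mul_l
  z_mul_l := h.y_mul_n
  z_mul_y := by rw [h.z_mul_y, neg_neg]

lemma map {S F : Type*} [Ring S] [FunLike F R S] [RingHomClass F R S]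
    (h : IsLightConeFrame n l y z) (φ : F) :
    IsLightConeFrame (φ n) (φ l) (φ y) (φ z) := by
  constructor <;> simp only [← map_mul, h.n_mul_n, h.l_mul_l, h.y_mul_y, h.z_mul_z, h.n_mul_l,
    h.y_mul_n, h.y_mul_l, h.z_mul_n, h.z_mul_l, h.z_mul_y, map_zero, map_neg, map_one, map_sub,
    map_ofNat]

lemma isUnit_z (h : IsLightConeFrame n l y z) : IsUnit z :=
  ⟨⟨z, -z, by rw [mul_neg, h.z_mul_z, neg_neg], by rw [neg_mul, h.z_mul_z, neg_neg]⟩, rfl⟩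

lemma nz_mul_nz (h : IsLightConeFrame n l y z) : n * z * (n * z) = 0 := by
  rw [mul_assoc, ← mul_assoc z, h.z_mul_n, neg_mul, mul_neg, mul_assoc n z, ← mul_assoc n,
    h.n_mul_n, zero_mul, neg_zero]

lemma nz_mul_ly_add_ly_mul_nz (h : IsLightConeFrame n l y z) :
    n * z * (l * y) + l * y * (n * z) = ⁅l, n⁆ * (z * y) := by
  have hnz : n * z * (l * y) = -(n * l * (z * y)) := by
    rw [mul_assoc, ← mul_assoc z, h.z_mul_l]; noncomm_ring
  have hly : l * y * (n * z) = l * n * (z * y) := by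
    rw [mul_assoc, ← mul_assoc y, h.y_mul_n, h.z_mul_y]; noncomm_ring
  rw [hnz, hly, Ring.lie_def, sub_mul]
  abel

lemma lie_mul_n (h : IsLightConeFrame n l y z) : ⁅l, n⁆ * n = 4 • n := by
  rw [Ring.lie_def, sub_mul, h.n_mul_l, sub_mul, mul_assoc, h.n_mul_n]
  noncomm_ring

lemma n_mul_lie (h : IsLightConeFrame n l y z) : n * ⁅l, n⁆ = -(4 • n) := by
  rw [Ring.lie_def, mul_sub, ← mul_assoc, ← mul_assoc, h.n_mul_n, h.n_mul_l, sub_mul, mul_assoc,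
    h.n_mul_n]
  noncomm_ring

lemma lie_mul_l (h : IsLightConeFrame n l y z) : ⁅l, n⁆ * l = -(4 • l) := by
  rw [← neg_lie_eq_lie_swap n l, neg_mul, h.symm.lie_mul_n]

lemma l_mul_lie (h : IsLightConeFrame n l y z) : l * ⁅l, n⁆ = 4 • l := by
  rw [← neg_lie_eq_lie_swap n l, mul_neg, h.symm.n_mul_lie, neg_neg]

lemma lie_mul_lie (h : IsLightConeFrame n l y z) : ⁅l, n⁆ * ⁅l, n⁆ = 16 := by
  calc ⁅l, n⁆ * ⁅l, n⁆ = ⁅l, n⁆ * l * n - ⁅l, n⁆ * n * l := by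
        rw [mul_assoc, mul_assoc, ← mul_sub, ← Ring.lie_def]
    _ = -(4 • (l * n)) - 4 • (n * l) := by
        rw [h.lie_mul_l, h.lie_mul_n, neg_mul, smul_mul_assoc, smul_mul_assoc]
    _ = 16 := by rw [h.n_mul_l]; noncomm_ring; norm_num

lemma commute_lie_z (h : IsLightConeFrame n l y z) : Commute ⁅l, n⁆ z := by
  have hln : l * n * z = z * (l * n) := by
    rw [← mul_assoc z, h.z_mul_l, neg_mul, mul_assoc l z, h.z_mul_n, mul_neg, neg_neg, mul_assoc]
  have hnl : n * l * z = z * (n * l) := by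
    rw [← mul_assoc z, h.z_mul_n, neg_mul, mul_assoc n z, h.z_mul_l, mul_neg, neg_neg, mul_assoc]
  rw [Commute, SemiconjBy, Ring.lie_def, sub_mul, mul_sub, hln, hnl]

lemma commute_lie_y (h : IsLightConeFrame n l y z) : Commute ⁅l, n⁆ y := by
  rw [← neg_lie_eq_lie_swap n l]
  exact h.symm.commute_lie_z.neg_left

lemma zy_mul_zy (h : IsLightConeFrame n l y z) : z * y * (z * y) = -1 := by
  calc z * y * (z * y) = z * (y * z) * y := by noncomm_ring
    _ = -(z * z) * (y * y) := by rw [h.symm.z_mul_y]; noncomm_ring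
    _ = -1 := by rw [h.z_mul_z, h.y_mul_y]; noncomm_ring

lemma lie_mul_zy_sq (h : IsLightConeFrame n l y z) : (⁅l, n⁆ * (z * y)) ^ 2 = -16 := by
  rw [(h.commute_lie_z.mul_right h.commute_lie_y).mul_pow, sq, sq, h.lie_mul_lie, h.zy_mul_zy,
    mul_neg_one]

variable {k : Type*} [CommRing k] [Algebra k R]

lemma smul_nz_add_smul_ly_sq (h : IsLightConeFrame n l y z) (α β : k) :
    (α • (n * z) + β • (l * y)) ^ 2 = (α * β) • (⁅l, n⁆ * (z * y)) := by
  rw [← h.nz_mul_ly_add_ly_mul_nz, sq, add_mul, mul_add, mul_add]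
  simp only [smul_mul_smul_comm, h.nz_mul_nz, h.symm.nz_mul_nz, smul_zero, zero_add, add_zero,
    smul_add, mul_comm β α]

lemma smul_nz_add_smul_ly_pow_four (h : IsLightConeFrame n l y z) (α β : k) :
    (α • (n * z) + β • (l * y)) ^ 4 = algebraMap k R (-16 * (α * β) ^ 2) := by
  calc (α • (n * z) + β • (l * y)) ^ 4 = ((α * β) • (⁅l, n⁆ * (z * y))) ^ 2 := by
        rw [← h.smul_nz_add_smul_ly_sq, ← pow_mul]
    _ = (α * β) ^ 2 • (-16 : R) := by rw [smul_pow, h.lie_mul_zy_sq]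
    _ = algebraMap k R (-16 * (α * β) ^ 2) := by
        rw [Algebra.smul_def, Algebra.commutes, map_mul, map_neg, map_ofNat]

end Ring

section Complex

variable {R : Type*} [Ring R] [Algebra ℂ R] {n l y z : R}

/-- Up to the factor `√2`, the boost `exp (iπK/4)`, `K = [l, n]/4`, of imaginary rapidity in the
plane of `n` and `l`; conjugation by it multiplies `n` by `i` and `l` by `-i`. -/
def boost (n l : R) : R := 1 + (I / 4) • ⁅l, n⁆

lemma boost_mul_n (h : IsLightConeFrame n l y z) : boost n l * n = (1 + I) • n := by
  rw [boost, add_mul, one_mul, smul_mul_assoc, h.lie_mul_n]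
  module

lemma n_mul_boost (h : IsLightConeFrame n l y z) : n * boost n l = (1 - I) • n := by
  rw [boost, mul_add, mul_one, mul_smul_comm, h.n_mul_lie]
  module

lemma boost_mul_l (h : IsLightConeFrame n l y z) : boost n l * l = (1 - I) • l := by
  rw [boost, add_mul, one_mul, smul_mul_assoc, h.lie_mul_l]
  module

lemma l_mul_boost (h : IsLightConeFrame n l y z) : l * boost n l = (1 + I) • l := by
  rw [boost, mul_add, mul_one, mul_smul_comm, h.l_mul_lie]
  module

lemma commute_boost_y (h : IsLightConeFrame n l y z) : Commute (boost n l) y :=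
  (Commute.one_left y).add_left (h.commute_lie_y.smul_left _)

lemma commute_boost_z (h : IsLightConeFrame n l y z) : Commute (boost n l) z :=
  (Commute.one_left z).add_left (h.commute_lie_z.smul_left _)

lemma boost_mul_boost_swap (h : IsLightConeFrame n l y z) :
    boost n l * boost l n = (2 : ℂ) • (1 : R) := by
  calc boost n l * boost l n = 1 - (I / 4 * (I / 4)) • (⁅l, n⁆ * ⁅l, n⁆) := by
        rw [boost, boost, ← neg_lie_eq_lie_swap l n, ← smul_mul_smul_comm, smul_neg,
          ← sub_eq_add_neg, add_mul, mul_sub, mul_sub, mul_one, mul_one, one_mul,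
          sub_add_sub_cancel]
    _ = 1 - (I / 4 * (I / 4)) • 16 • (1 : R) := by
        rw [h.lie_mul_lie, nsmul_one, Nat.cast_ofNat]
    _ = (1 - I * I) • (1 : R) := by module
    _ = (2 : ℂ) • (1 : R) := by rw [I_mul_I]; norm_num

lemma isUnit_boost (h : IsLightConeFrame n l y z) : IsUnit (boost n l) :=
  ⟨⟨boost n l, (1 / 2 : ℂ) • boost l n,
    by rw [mul_smul_comm, h.boost_mul_boost_swap, smul_smul]; norm_num,
    by rw [smul_mul_assoc, h.symm.boost_mul_boost_swap, smul_smul]; norm_num⟩, rfl⟩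

lemma nz_mul_z_mul_boost (h : IsLightConeFrame n l y z) :
    n * z * (z * boost n l) = I • (z * boost n l * (n * z)) := by
  calc n * z * (z * boost n l) = -(z * (n * boost n l) * z) := by
        rw [← h.commute_boost_z.eq, ← mul_assoc z n, h.z_mul_n]; noncomm_ring
    _ = I • (z * (boost n l * n) * z) := by
        rw [h.n_mul_boost, h.boost_mul_n, mul_smul_comm, mul_smul_comm, smul_mul_assoc,
          smul_mul_assoc, smul_smul, ← neg_smul, mul_add, I_mul_I]
        module
    _ = I • (z * boost n l * (n * z)) := by simp only [mul_assoc]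

lemma ly_mul_z_mul_boost (h : IsLightConeFrame n l y z) :
    l * y * (z * boost n l) = I • (z * boost n l * (l * y)) := by
  calc l * y * (z * boost n l) = l * (y * z) * boost n l := by simp only [mul_assoc]
    _ = z * l * (y * boost n l) := by
        rw [h.symm.z_mul_y, h.z_mul_l]; noncomm_ring
    _ = z * (l * boost n l) * y := by
        rw [← h.commute_boost_y.eq]; simp only [mul_assoc]
    _ = I • (z * (boost n l * l) * y) := by
        rw [h.l_mul_boost, h.boost_mul_l, mul_smul_comm, mul_smul_comm, smul_mul_assoc,
          smul_mul_assoc, smul_smul, mul_sub, I_mul_I]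
        module
    _ = I • (z * boost n l * (l * y)) := by simp only [mul_assoc]

lemma smul_nz_add_smul_ly_mul_z_mul_boost (h : IsLightConeFrame n l y z) (α β : ℂ) :
    (α • (n * z) + β • (l * y)) * (z * boost n l) =
      I • (z * boost n l * (α • (n * z) + β • (l * y))) := by
  rw [add_mul, smul_mul_assoc, smul_mul_assoc, h.nz_mul_z_mul_boost, h.ly_mul_z_mul_boost, mul_add,
    mul_smul_comm, mul_smul_comm, smul_add, smul_comm α, smul_comm β]

end Complex

section End

open Module

variable {V : Type*} [AddCommGroup V] [Module ℂ V] {n l y z : End ℂ V} {α β μ : ℂ}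

lemma injective_z_mul_boost (h : IsLightConeFrame n l y z) :
    Function.Injective (z * boost n l : End ℂ V) :=
  ((End.isUnit_iff _).1 (h.isUnit_z.mul h.isUnit_boost)).injective

lemma hasEigenvalue_iff [FiniteDimensional ℂ V] [Nontrivial V] (h : IsLightConeFrame n l y z)
    (hαβ : α * β ≠ 0) :
    (α • (n * z) + β • (l * y)).HasEigenvalue μ ↔ μ ^ 4 = -16 * (α * β) ^ 2 :=
  hasEigenvalue_iff_pow_eq isPrimitiveRoot_I (by simpa using hαβ)
    (h.smul_nz_add_smul_ly_pow_four α β) h.injective_z_mul_boost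
    (h.smul_nz_add_smul_ly_mul_z_mul_boost α β)

lemma finrank_eigenspace (h : IsLightConeFrame n l y z) (hV : finrank ℂ V = 4) (hαβ : α * β ≠ 0)
    (hμ : μ ^ 4 = -16 * (α * β) ^ 2) :
    finrank ℂ ((α • (n * z) + β • (l * y)).eigenspace μ) = 1 := by
  have : FiniteDimensional ℂ V := .of_finrank_pos (by lia)
  have : Nontrivial V := nontrivial_of_finrank_pos (R := ℂ) (by lia)
  exact finrank_eigenspace_eq_one_of_pow_eq hV isPrimitiveRoot_I (by simpa using hαβ)
    (h.smul_nz_add_smul_ly_pow_four α β) h.injective_z_mul_boost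
    (h.smul_nz_add_smul_ly_mul_z_mul_boost α β) hμ

end End

end IsLightConeFrame

lemma σ1_mul_σ1 : σ1 * σ1 = 1 := by simp [σ1, one_fin_two]
lemma σ2_mul_σ2 : σ2 * σ2 = 1 := by simp [σ2, one_fin_two]
lemma σ3_mul_σ3 : σ3 * σ3 = 1 := by simp [σ3, one_fin_two]
lemma σ2_mul_σ1 : σ2 * σ1 = -(σ1 * σ2) := by simp [σ1, σ2]
lemma σ3_mul_σ1 : σ3 * σ1 = -(σ1 * σ3) := by simp [σ1, σ3]
lemma σ3_mul_σ2 : σ3 * σ2 = -(σ2 * σ3) := by simp [σ2, σ3]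

lemma smul_σ2_mul_smul_σ2 : (I • σ2) * (I • σ2) = -1 := by
  rw [smul_mul_smul_comm, I_mul_I, σ2_mul_σ2, neg_one_smul]

lemma neg_kronecker {l m n p R : Type*} [Ring R] (A : Matrix l m R) (B : Matrix n p R) :
    (-A) ⊗ₖ B = -(A ⊗ₖ B) := by ext; simp

lemma kronecker_neg {l m n p R : Type*} [Ring R] (A : Matrix l m R) (B : Matrix n p R) :
    A ⊗ₖ (-B) = -(A ⊗ₖ B) := by ext; simp

lemma smul_σ2_kronecker_mul_self {A : Matrix (Fin 2) (Fin 2) ℂ} (hA : A * A = 1) :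
    ((I • σ2) ⊗ₖ A) * ((I • σ2) ⊗ₖ A) = -1 := by
  rw [← mul_kronecker_mul, smul_σ2_mul_smul_σ2, hA, neg_kronecker, one_kronecker_one]

lemma smul_σ2_kronecker_anticomm {A B : Matrix (Fin 2) (Fin 2) ℂ} (hBA : B * A = -(A * B)) :
    ((I • σ2) ⊗ₖ B) * ((I • σ2) ⊗ₖ A) = -(((I • σ2) ⊗ₖ A) * ((I • σ2) ⊗ₖ B)) := by
  rw [← mul_kronecker_mul, ← mul_kronecker_mul, hBA, kronecker_neg]

lemma smul_σ2_kronecker_mul_γ2' (A : Matrix (Fin 2) (Fin 2) ℂ) :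
    ((I • σ2) ⊗ₖ A) * γ2' = -(γ2' * ((I • σ2) ⊗ₖ A)) := by
  rw [γ2', ← mul_kronecker_mul, ← mul_kronecker_mul, mul_smul_comm, smul_mul_assoc, σ3_mul_σ2,
    smul_neg, neg_kronecker, neg_neg, mul_one, one_mul]

lemma γ2'_mul_γ2' : γ2' * γ2' = 1 := by
  rw [γ2', ← mul_kronecker_mul, σ3_mul_σ3, mul_one, one_kronecker_one]

lemma isLightConeFrame_γ : IsLightConeFrame (γ3' - γ2') (γ2' + γ3') γy γ4' := by
  have h22 : γ2' * γ2' = 1 := γ2'_mul_γ2'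
  have h33 : γ3' * γ3' = -1 := smul_σ2_kronecker_mul_self σ2_mul_σ2
  have h32 : γ3' * γ2' = -(γ2' * γ3') := smul_σ2_kronecker_mul_γ2' σ2
  have hy2 : γy * γ2' = -(γ2' * γy) := smul_σ2_kronecker_mul_γ2' σ1
  have h42 : γ4' * γ2' = -(γ2' * γ4') := smul_σ2_kronecker_mul_γ2' σ3
  have h3y : γ3' * γy = -(γy * γ3') := smul_σ2_kronecker_anticomm σ2_mul_σ1
  have h43 : γ4' * γ3' = -(γ3' * γ4') := smul_σ2_kronecker_anticomm σ3_mul_σ2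
  constructor
  case y_mul_y => exact smul_σ2_kronecker_mul_self σ1_mul_σ1
  case z_mul_z => exact smul_σ2_kronecker_mul_self σ3_mul_σ3
  case z_mul_y => exact smul_σ2_kronecker_anticomm σ3_mul_σ1
  all_goals simp only [sub_mul, mul_sub, add_mul, mul_add, h22, h33, h32, hy2, h42, h3y, h43]
  all_goals grind

/-- The operator `a + ζ b` of the Killing spinor equation for `∂_y + λ₆`; the two decoupled
equations are `ζ = ±i`, and `s` stands for `1/√2`. -/
def killingOperator (ζ c s : ℂ) : Matrix (Fin 2 × Fin 2) (Fin 2 × Fin 2) ℂ :=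
  (γ3' * γ4' - γ2' * γ4') + ζ • (c • 1 - s • ((γ2' + γ3') * γy))

lemma ker_killingOperator_eq_eigenspace (ζ c s : ℂ) :
    LinearMap.ker (killingOperator ζ c s).mulVecLin =
      Module.End.eigenspace ((1 : ℂ) • (toLinAlgEquiv' (γ3' - γ2') * toLinAlgEquiv' γ4') +
        (-(ζ * s)) • (toLinAlgEquiv' (γ2' + γ3') * toLinAlgEquiv' γy)) (-(ζ * c)) := by
  have hsplit : killingOperator ζ c s = (1 : ℂ) • ((γ3' - γ2') * γ4') +
      (-(ζ * s)) • ((γ2' + γ3') * γy) - (-(ζ * c)) • 1 := by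
    rw [killingOperator, sub_mul]
    module
  have hlin : (killingOperator ζ c s).mulVecLin = toLinAlgEquiv' (killingOperator ζ c s) := rfl
  rw [hlin, hsplit, Module.End.eigenspace_def]
  simp only [map_sub, map_add, map_smul, map_mul, map_one]

lemma isLightConeFrame_toLinAlgEquiv'_γ :
    IsLightConeFrame (toLinAlgEquiv' (γ3' - γ2')) (toLinAlgEquiv' (γ2' + γ3'))
      (toLinAlgEquiv' γy) (toLinAlgEquiv' γ4') :=
  isLightConeFrame_γ.map toLinAlgEquiv'

lemma neg_mul_pow_four_eq_iff {ζ c s : ℂ} (hζ : ζ ^ 2 = -1) :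
    (-(ζ * c)) ^ 4 = -16 * (1 * -(ζ * s)) ^ 2 ↔ c ^ 4 = 16 * s ^ 2 := by
  have hleft : (-(ζ * c)) ^ 4 = c ^ 4 := by linear_combination (ζ ^ 2 - 1) * c ^ 4 * hζ
  have hright : -16 * (1 * -(ζ * s)) ^ 2 = 16 * s ^ 2 := by linear_combination -16 * s ^ 2 * hζ
  rw [hleft, hright]

lemma ker_killingOperator_ne_bot_iff {ζ c s : ℂ} (hζ : ζ ^ 2 = -1) (hs : s ≠ 0) :
    LinearMap.ker (killingOperator ζ c s).mulVecLin ≠ ⊥ ↔ c ^ 4 = 16 * s ^ 2 := by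
  have hζ0 : ζ ≠ 0 := by rintro rfl; norm_num at hζ
  rw [ker_killingOperator_eq_eigenspace, ← Module.End.hasEigenvalue_iff,
    isLightConeFrame_toLinAlgEquiv'_γ.hasEigenvalue_iff (by simp [hζ0, hs]),
    neg_mul_pow_four_eq_iff hζ]

lemma finrank_ker_killingOperator {ζ c s : ℂ} (hζ : ζ ^ 2 = -1) (hs : s ≠ 0)
    (hc : c ^ 4 = 16 * s ^ 2) :
    Module.finrank ℂ (LinearMap.ker (killingOperator ζ c s).mulVecLin) = 1 := by
  have hζ0 : ζ ≠ 0 := by rintro rfl; norm_num at hζ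
  rw [ker_killingOperator_eq_eigenspace]
  exact isLightConeFrame_toLinAlgEquiv'_γ.finrank_eigenspace (by simp) (by simp [hζ0, hs])
    ((neg_mul_pow_four_eq_iff hζ).2 hc)

lemma eq_two_rpow_three_quarters_iff {c : ℝ} (hc : 0 ≤ c) :
    c = (2 : ℝ) ^ ((3 : ℝ) / 4) ↔ (c : ℂ) ^ 4 = 16 * ((1 / Real.sqrt 2 : ℝ) : ℂ) ^ 2 := by
  have hpow : ((2 : ℝ) ^ ((3 : ℝ) / 4)) ^ 4 = 16 * (1 / Real.sqrt 2) ^ 2 := by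
    rw [← Real.rpow_mul_natCast zero_le_two, div_pow, Real.sq_sqrt zero_le_two]
    norm_num
  rw [← pow_left_inj₀ hc (by positivity) four_ne_zero, hpow]
  norm_cast

/-- For `a = γ₃γ₄ − γ₂γ₄` and `b = cI₄ − (1/√2)(γ₂+γ₃)γ_y` with `c > 0`: one of
`a + ib`, `a − ib` has nonzero kernel iff `c = 2^{3/4}`; and when `c = 2^{3/4}` the
dimensions of the two kernels sum to 2 (quarter-BPS case λ₆ for `ℝ × AdS₄`). -/
theorem stmt_9 (c : ℝ) (hc : 0 < c) :
    ((LinearMap.ker ((γ3' * γ4' - γ2' * γ4')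
        + I • ((c : ℂ) • 1 - ((1 / Real.sqrt 2 : ℝ) : ℂ) • ((γ2' + γ3') * γy))).mulVecLin ≠ ⊥ ∨
      LinearMap.ker ((γ3' * γ4' - γ2' * γ4')
        - I • ((c : ℂ) • 1 - ((1 / Real.sqrt 2 : ℝ) : ℂ) • ((γ2' + γ3') * γy))).mulVecLin ≠ ⊥) ↔
      c = (2 : ℝ) ^ ((3 : ℝ) / 4)) ∧
    (c = (2 : ℝ) ^ ((3 : ℝ) / 4) →
      Module.finrank ℂ
        (LinearMap.ker ((γ3' * γ4' - γ2' * γ4')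
          + I • ((c : ℂ) • 1 - ((1 / Real.sqrt 2 : ℝ) : ℂ) • ((γ2' + γ3') * γy))).mulVecLin) +
      Module.finrank ℂ
        (LinearMap.ker ((γ3' * γ4' - γ2' * γ4')
          - I • ((c : ℂ) • 1 - ((1 / Real.sqrt 2 : ℝ) : ℂ) • ((γ2' + γ3') * γy))).mulVecLin)
        = 2) := by
  rw [sub_eq_add_neg (γ3' * γ4' - γ2' * γ4'), ← neg_smul, ← killingOperator, ← killingOperator,
    eq_two_rpow_three_quarters_iff hc.le]
  have hI : I ^ 2 = -1 := I_sq
  have hnegI : (-I) ^ 2 = -1 := by rw [neg_sq, I_sq]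
  have hs : ((1 / Real.sqrt 2 : ℝ) : ℂ) ≠ 0 := by norm_num
  constructor
  · rw [ker_killingOperator_ne_bot_iff hI hs, ker_killingOperator_ne_bot_iff hnegI hs, or_self]
  · intro hc4
    rw [finrank_ker_killingOperator hI hs hc4, finrank_ker_killingOperator hnegI hs hc4]

end
end
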